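/- Let 0 < s, t with s + t ≤ 1 and let Φ : M_m(ℂ) → M_n(ℂ) be a semiunital Schwarz map (i.e. Φ†(I) = (n/m) I). Then for all positive semidefinite X, Y ∈ M_n(ℂ) and all K ∈ M_m(ℂ): tr[Φ(K)* X^s Φ(K) Y^t] ≤ (n/m)^{1-(s+t)} tr[K* Φ†(X)^s K Φ†(Y)^t]. -/

import Mathlib

open Matrix
open scoped ComplexOrder

/-- Real power of a matrix, defined spectrally for Hermitian matrices (junk value `0` otherwise). -/
noncomputable def mpow {k : ℕ} (A : Matrix (Fin k) (Fin k) ℂ) (p : ℝ) : Matrix (Fin k) (Fin k) ℂ :=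
  if hA : A.IsHermitian then
    (hA.eigenvectorUnitary : Matrix (Fin k) (Fin k) ℂ) *
      Matrix.diagonal (fun i => ((hA.eigenvalues i ^ p : ℝ) : ℂ)) *
      (hA.eigenvectorUnitary : Matrix (Fin k) (Fin k) ℂ)ᴴ
  else 0

/-- A Schwarz map: `Φ(K*K) ≥ Φ(K)*Φ(K)` for all `K`. -/
def IsSchwarz {a b : ℕ} (Φ : Matrix (Fin a) (Fin a) ℂ →ₗ[ℂ] Matrix (Fin b) (Fin b) ℂ) : Prop :=
  ∀ K, (Φ (Kᴴ * K) - (Φ K)ᴴ * Φ K).PosSemidef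

/-- A positive map: sends positive semidefinite matrices to positive semidefinite matrices. -/
def IsPositiveMap {a b : ℕ} (Φ : Matrix (Fin a) (Fin a) ℂ →ₗ[ℂ] Matrix (Fin b) (Fin b) ℂ) : Prop :=
  ∀ X, X.PosSemidef → (Φ X).PosSemidef

/-- `Ψ` is the Hilbert–Schmidt adjoint of `Φ`: `⟨X, Φ Y⟩ = ⟨Ψ X, Y⟩`. -/
def IsHSAdjoint {a b : ℕ} (Φ : Matrix (Fin a) (Fin a) ℂ →ₗ[ℂ] Matrix (Fin b) (Fin b) ℂ)
    (Ψ : Matrix (Fin b) (Fin b) ℂ →ₗ[ℂ] Matrix (Fin a) (Fin a) ℂ) : Prop :=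
  ∀ X Y, (Xᴴ * Φ Y).trace = ((Ψ X)ᴴ * Y).trace


open MeasureTheory in
lemma aux_scalar {s : ℝ} (hs : s ∈ Set.Ioo (0:ℝ) 1) {x y : ℝ} (hx : 0 ≤ x) (hy : 0 ≤ y) :
    IntegrableOn (fun t : ℝ => t ^ (s - 2) * (x * (t * y) / (x + t * y))) (Set.Ioi 0) ∧
    ∫ t in Set.Ioi (0:ℝ), t ^ (s - 2) * (x * (t * y) / (x + t * y)) =
      x ^ s * y ^ (1 - s) * ∫ t in Set.Ioi 0, Real.rpowIntegrand₀₁ s t 1 := by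
  rcases hy.eq_or_lt with rfl | hy
  · have : (1 - s) ≠ 0 := by have := hs.2; linarith
    simp [Real.zero_rpow this]
  have key : Set.EqOn (fun t : ℝ => y * Real.rpowIntegrand₀₁ s t (x / y))
      (fun t : ℝ => t ^ (s - 2) * (x * (t * y) / (x + t * y))) (Set.Ioi 0) := by
    intro t ht
    have ht : 0 < t := ht
    simp only
    rw [Real.rpowIntegrand₀₁_eq_pow_div hs ht.le (by positivity)]
    have : s - 1 = (s - 2) + 1 := by ring
    rw [this, Real.rpow_add ht, Real.rpow_one]
    have : t + x / y ≠ 0 := by positivity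
    have : x + t * y ≠ 0 := by positivity
    field_simp
    ring
  constructor
  · refine IntegrableOn.congr_fun ?_ key measurableSet_Ioi
    exact (Real.integrableOn_rpowIntegrand₀₁_Ioi hs (by positivity)).const_mul y
  · rw [← setIntegral_congr_fun measurableSet_Ioi key, integral_const_mul,
      Real.integral_rpowIntegrand₀₁_eq_rpow_mul_const hs (by positivity), ← mul_assoc]
    congr 1
    rw [Real.div_rpow hx hy.le, Real.rpow_sub hy, Real.rpow_one]
    field_simp

open MeasureTheory in
lemma aux_interp {I J : Type*} [Fintype I] [Fintype J] {s : ℝ} (hs : s ∈ Set.Ioo (0:ℝ) 1)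
    (x y : I → ℝ) (hx : ∀ i, 0 ≤ x i) (hy : ∀ i, 0 ≤ y i)
    (x' y' : J → ℝ) (hx' : ∀ i, 0 ≤ x' i) (hy' : ∀ i, 0 ≤ y' i)
    (q : I → (J → ℂ) → ℝ)
    (hq : ∀ i, ∀ α β : ℝ, 0 ≤ α → 0 ≤ β → ∀ a b,
      α * β / (α + β) * q i (a + b) ≤ α * q i a + β * q i b)
    (h1 : ∀ a, ∑ i, x i * q i a ≤ ∑ j, x' j * Complex.normSq (a j))
    (h2 : ∀ a, ∑ i, y i * q i a ≤ ∑ j, y' j * Complex.normSq (a j))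
    (v : J → ℂ) :
    ∑ i, x i ^ s * y i ^ (1 - s) * q i v ≤
      ∑ j, x' j ^ s * y' j ^ (1 - s) * Complex.normSq (v j) := by
  set C := ∫ t in Set.Ioi 0, Real.rpowIntegrand₀₁ s t 1 with hC
  have hCpos : 0 < C := Real.integral_rpowIntegrand₀₁_one_pos hs
  have hL : ∫ t in Set.Ioi (0:ℝ), ∑ i, t ^ (s - 2) * (x i * (t * y i) / (x i + t * y i)) * q i v
      = (∑ i, x i ^ s * y i ^ (1 - s) * q i v) * C := by
    rw [integral_finsetSum _ fun i _ => ((aux_scalar hs (hx i) (hy i)).1.mul_const _),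
      Finset.sum_mul]
    refine Finset.sum_congr rfl fun i _ => ?_
    rw [integral_mul_const, (aux_scalar hs (hx i) (hy i)).2]
    ring
  have hR : ∫ t in Set.Ioi (0:ℝ), ∑ i, t ^ (s - 2) * (x' i * (t * y' i) / (x' i + t * y' i)) *
        Complex.normSq (v i)
      = (∑ i, x' i ^ s * y' i ^ (1 - s) * Complex.normSq (v i)) * C := by
    rw [integral_finsetSum _ fun i _ => ((aux_scalar hs (hx' i) (hy' i)).1.mul_const _),
      Finset.sum_mul]
    refine Finset.sum_congr rfl fun i _ => ?_
    rw [integral_mul_const, (aux_scalar hs (hx' i) (hy' i)).2]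
    ring
  refine le_of_mul_le_mul_right ?_ hCpos
  rw [← hL, ← hR]
  refine setIntegral_mono_on
    (integrable_finsetSum _ fun i _ => ((aux_scalar hs (hx i) (hy i)).1.mul_const _))
    (integrable_finsetSum _ fun i _ => ((aux_scalar hs (hx' i) (hy' i)).1.mul_const _))
    measurableSet_Ioi fun t ht => ?_
  have ht : 0 < t := ht
  simp only [mul_assoc (t ^ (s - 2))]
  rw [← Finset.mul_sum, ← Finset.mul_sum]
  refine mul_le_mul_of_nonneg_left ?_ (Real.rpow_nonneg ht.le _)
  set a : J → ℂ := fun j => ((t * y' j / (x' j + t * y' j) : ℝ) : ℂ) * v j with ha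
  calc ∑ i, x i * (t * y i) / (x i + t * y i) * q i v
      ≤ ∑ i, (x i * q i a + t * y i * q i (v - a)) := by
        refine Finset.sum_le_sum fun i _ => ?_
        have := hq i (x i) (t * y i) (hx i) (mul_nonneg ht.le (hy i)) a (v - a)
        rwa [add_sub_cancel] at this
    _ = ∑ i, x i * q i a + t * ∑ i, y i * q i (v - a) := by
        rw [Finset.sum_add_distrib, Finset.mul_sum]
        simp only [mul_assoc]
    _ ≤ ∑ j, x' j * Complex.normSq (a j) + t * ∑ j, y' j * Complex.normSq ((v - a) j) :=
        add_le_add (h1 a) (mul_le_mul_of_nonneg_left (h2 _) ht.le)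
    _ = _ := by
        rw [Finset.mul_sum, ← Finset.sum_add_distrib]
        refine Finset.sum_congr rfl fun j _ => ?_
        have e : (v - a) j = ((1 - t * y' j / (x' j + t * y' j) : ℝ) : ℂ) * v j := by
          simp only [ha, Pi.sub_apply]; push_cast; ring
        rw [e]
        simp only [ha, Complex.normSq_mul, Complex.normSq_ofReal]
        by_cases h0 : x' j + t * y' j = 0
        · have h3 := mul_nonneg ht.le (hy' j)
          have h4 : t * y' j = 0 := by have := hx' j; linarith
          have h5 : y' j = 0 := by
            rcases mul_eq_zero.1 h4 with h | h
            · linarith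
            · exact h
          simp [h5]
        · field_simp
          ring

noncomputable def sp {k : ℕ} (U : Matrix (Fin k) (Fin k) ℂ) (x : Fin k → ℝ) :
    Matrix (Fin k) (Fin k) ℂ :=
  U * Matrix.diagonal (fun i => ((x i : ℝ) : ℂ)) * Uᴴ

lemma sp_eq_sum {k : ℕ} (U : Matrix (Fin k) (Fin k) ℂ) (x : Fin k → ℝ) :
    sp U x = ∑ i, ((x i : ℝ) : ℂ) • sp U (Pi.single i 1) := by
  unfold sp
  have : Matrix.diagonal (fun i => ((x i : ℝ) : ℂ)) =
      ∑ i, ((x i : ℝ) : ℂ) • Matrix.diagonal (fun j => (((Pi.single i 1 : Fin k → ℝ) j : ℝ) : ℂ)) := by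
    ext a b
    rw [Matrix.sum_apply]
    by_cases h : a = b
    · subst h; simp [Pi.single_apply, apply_ite Complex.ofReal]
    · simp [h]
  rw [this, Finset.mul_sum, Finset.sum_mul]
  simp

lemma sp_isHermitian {k : ℕ} (U : Matrix (Fin k) (Fin k) ℂ) (x : Fin k → ℝ) :
    (sp U x).IsHermitian := by
  unfold sp
  refine Matrix.isHermitian_mul_mul_conjTranspose _ ?_
  ext a b
  by_cases h : a = b
  · subst h; simp
  · simp [h, Ne.symm h]

lemma sp_posSemidef {k : ℕ} (U : Matrix (Fin k) (Fin k) ℂ) (x : Fin k → ℝ) (hx : ∀ i, 0 ≤ x i) :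
    (sp U x).PosSemidef := by
  unfold sp
  refine Matrix.PosSemidef.mul_mul_conjTranspose_same (Matrix.PosSemidef.diagonal ?_) _
  intro i
  simpa using hx i

lemma sp_one {k : ℕ} (U : Matrix (Fin k) (Fin k) ℂ) (hU : U * Uᴴ = 1) :
    sp U (fun _ => 1) = 1 := by
  simp [sp, hU]

lemma sp_smul {k : ℕ} (U : Matrix (Fin k) (Fin k) ℂ) (c : ℝ) (x : Fin k → ℝ) :
    sp U (fun i => c * x i) = (c : ℂ) • sp U x := by
  rw [sp_eq_sum, sp_eq_sum U x, Finset.smul_sum]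
  simp [mul_smul]

lemma mpow_eq_sp {k : ℕ} {A : Matrix (Fin k) (Fin k) ℂ} (hA : A.IsHermitian) (p : ℝ) :
    mpow A p = sp hA.eigenvectorUnitary (fun i => hA.eigenvalues i ^ p) := by
  simp [mpow, sp, hA]

lemma eq_sp {k : ℕ} {A : Matrix (Fin k) (Fin k) ℂ} (hA : A.IsHermitian) :
    A = sp hA.eigenvectorUnitary hA.eigenvalues := by
  conv_lhs => rw [hA.spectral_theorem]
  rfl

lemma eu_left {k : ℕ} {A : Matrix (Fin k) (Fin k) ℂ} (hA : A.IsHermitian) :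
    (hA.eigenvectorUnitary : Matrix (Fin k) (Fin k) ℂ)ᴴ * hA.eigenvectorUnitary = 1 :=
  Unitary.coe_star_mul_self hA.eigenvectorUnitary

lemma eu_right {k : ℕ} {A : Matrix (Fin k) (Fin k) ℂ} (hA : A.IsHermitian) :
    (hA.eigenvectorUnitary : Matrix (Fin k) (Fin k) ℂ) * (hA.eigenvectorUnitary : Matrix (Fin k) (Fin k) ℂ)ᴴ = 1 :=
  Unitary.coe_mul_star_self hA.eigenvectorUnitary

lemma trace_sp {a : ℕ} (U V K : Matrix (Fin a) (Fin a) ℂ)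
    (x y : Fin a → ℝ) :
    (Kᴴ * sp U x * K * sp V y).trace.re =
      ∑ p : Fin a × Fin a, x p.1 * y p.2 * Complex.normSq ((Uᴴ * K * V) p.1 p.2) := by
  have : (Kᴴ * sp U x * K * sp V y).trace =
      ((Uᴴ * K * V)ᴴ * Matrix.diagonal (fun i => ((x i : ℝ) : ℂ)) * (Uᴴ * K * V) *
        Matrix.diagonal (fun i => ((y i : ℝ) : ℂ))).trace := by
    unfold sp
    rw [← Matrix.mul_assoc, Matrix.trace_mul_comm]
    simp only [Matrix.conjTranspose_mul, Matrix.conjTranspose_conjTranspose, Matrix.mul_assoc]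
  rw [this, Matrix.trace, Complex.re_sum, Fintype.sum_prod_type, Finset.sum_comm]
  refine Finset.sum_congr rfl fun j _ => ?_
  rw [Matrix.diag_apply, Matrix.mul_diagonal, Matrix.mul_apply, Finset.sum_mul, Complex.re_sum]
  refine Finset.sum_congr rfl fun i _ => ?_
  rw [Matrix.mul_diagonal, Matrix.conjTranspose_apply]
  generalize (Uᴴ * K * V) i j = z
  simp [Complex.normSq_apply]
  ring

lemma quad_sp {a : ℕ} (U : Matrix (Fin a) (Fin a) ℂ) (x : Fin a → ℝ) (v : Fin a → ℂ) :
    (star v ⬝ᵥ (sp U x *ᵥ v)).re = ∑ i, x i * Complex.normSq ((Uᴴ *ᵥ v) i) := by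
  have : star v ⬝ᵥ (sp U x *ᵥ v) = star (Uᴴ *ᵥ v) ⬝ᵥ
      (Matrix.diagonal (fun i => ((x i : ℝ) : ℂ)) *ᵥ (Uᴴ *ᵥ v)) := by
    unfold sp
    rw [Matrix.star_mulVec, ← Matrix.dotProduct_mulVec]
    simp [Matrix.mulVec_mulVec, Matrix.mul_assoc]
  rw [this, dotProduct, Complex.re_sum]
  refine Finset.sum_congr rfl fun i _ => ?_
  rw [Matrix.mulVec_diagonal, Pi.star_apply]
  generalize (Uᴴ *ᵥ v) i = z
  simp [Complex.normSq_apply]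
  ring

lemma psd_of_re {a : ℕ} {M : Matrix (Fin a) (Fin a) ℂ} (hM : M.IsHermitian)
    (h : ∀ v : Fin a → ℂ, 0 ≤ (star v ⬝ᵥ (M *ᵥ v)).re) : M.PosSemidef := by
  refine Matrix.PosSemidef.of_dotProduct_mulVec_nonneg hM fun v => ?_
  rw [Complex.nonneg_iff]
  exact ⟨h v, (hM.im_star_dotProduct_mulVec_self v).symm⟩

open scoped MatrixOrder in
lemma psd_factor {a : ℕ} {B : Matrix (Fin a) (Fin a) ℂ} (hB : B.PosSemidef) :
    ∃ C : Matrix (Fin a) (Fin a) ℂ, B = Cᴴ * C :=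
  CStarAlgebra.nonneg_iff_eq_star_mul_self.mp hB.nonneg

lemma trace_mul_nonneg' {a : ℕ} {A B : Matrix (Fin a) (Fin a) ℂ} (hA : A.PosSemidef)
    (hB : B.PosSemidef) : 0 ≤ (A * B).trace := by
  obtain ⟨C, rfl⟩ := psd_factor hB
  rw [← Matrix.mul_assoc, Matrix.trace_mul_comm, ← Matrix.mul_assoc]
  exact (hA.mul_mul_conjTranspose_same C).trace_nonneg

lemma normSq_par (α β : ℝ) (hα : 0 ≤ α) (hβ : 0 ≤ β) (a b : ℂ) :
    α * β / (α + β) * Complex.normSq (a + b) ≤ α * Complex.normSq a + β * Complex.normSq b := by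
  rcases (add_nonneg hα hβ).eq_or_lt with h | h
  · rw [← h]
    have := Complex.normSq_nonneg a
    have := Complex.normSq_nonneg b
    simp; positivity
  · rw [div_mul_eq_mul_div, div_le_iff₀ h]
    simp only [Complex.normSq_apply, Complex.add_re, Complex.add_im]
    nlinarith [sq_nonneg (α * a.re - β * b.re), sq_nonneg (α * a.im - β * b.im)]

lemma quad_par {k : ℕ} {M : Matrix (Fin k) (Fin k) ℂ} (hM : M.PosSemidef)
    (α β : ℝ) (hα : 0 ≤ α) (hβ : 0 ≤ β) (a b : Fin k → ℂ) :
    α * β / (α + β) * (star (a + b) ⬝ᵥ (M *ᵥ (a + b))).re ≤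
      α * (star a ⬝ᵥ (M *ᵥ a)).re + β * (star b ⬝ᵥ (M *ᵥ b)).re := by
  have e : M = sp hM.1.eigenvectorUnitary hM.1.eigenvalues := eq_sp hM.1
  rw [e]
  simp only [quad_sp, Finset.mul_sum]
  rw [← Finset.sum_add_distrib]
  refine Finset.sum_le_sum fun i _ => ?_
  rw [Matrix.mulVec_add, Pi.add_apply]
  have := mul_le_mul_of_nonneg_left (normSq_par α β hα hβ
    (((hM.1.eigenvectorUnitary : Matrix (Fin k) (Fin k) ℂ)ᴴ *ᵥ a) i)
    (((hM.1.eigenvectorUnitary : Matrix (Fin k) (Fin k) ℂ)ᴴ *ᵥ b) i)) (hM.eigenvalues_nonneg i)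
  linarith

lemma phi_pos {m n : ℕ} {Φ : Matrix (Fin m) (Fin m) ℂ →ₗ[ℂ] Matrix (Fin n) (Fin n) ℂ}
    (hΦ : IsSchwarz Φ) : IsPositiveMap Φ := by
  intro X hX
  obtain ⟨C, rfl⟩ := psd_factor hX
  have := (hΦ C).add (Matrix.posSemidef_conjTranspose_mul_self (Φ C))
  rwa [sub_add_cancel] at this

lemma phi_star {m n : ℕ} {Φ : Matrix (Fin m) (Fin m) ℂ →ₗ[ℂ] Matrix (Fin n) (Fin n) ℂ}
    (hΦ : IsPositiveMap Φ) (A : Matrix (Fin m) (Fin m) ℂ) : Φ Aᴴ = (Φ A)ᴴ := by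
  have hK : ∀ K : Matrix (Fin m) (Fin m) ℂ, (Φ (Kᴴ * K))ᴴ = Φ (Kᴴ * K) := fun K =>
    (hΦ _ (Matrix.posSemidef_conjTranspose_mul_self K)).1
  have h0 := hK 1
  have hA := hK A
  have h1 := hK (1 + A)
  have h2 := hK (1 + Complex.I • A)
  simp only [Matrix.conjTranspose_add, Matrix.conjTranspose_one, Matrix.conjTranspose_smul,
    add_mul, mul_add, one_mul, mul_one, map_add, Matrix.smul_mul, Matrix.mul_smul, map_smul,
    smul_smul, hA] at h0 h1 h2
  ext i j
  have e1 := congrFun (congrFun h1 i) j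
  have e2 := congrFun (congrFun h2 i) j
  have e0 := congrFun (congrFun h0 i) j
  simp at e0 e1 e2 ⊢
  rw [e0] at e1 e2
  have e3 : (starRingEnd ℂ) ((Φ Aᴴ) j i) = (Φ A) i j + (Φ Aᴴ) i j - (starRingEnd ℂ) ((Φ A) j i) := by
    linear_combination e1
  rw [e3] at e2
  have : Complex.I * (2 * ((Φ Aᴴ) i j - (starRingEnd ℂ) ((Φ A) j i))) = 0 := by
    linear_combination e2
  have h := (mul_eq_zero.1 this).resolve_left Complex.I_ne_zero
  linear_combination h / 2

lemma psi_pos {m n : ℕ} {Φ : Matrix (Fin m) (Fin m) ℂ →ₗ[ℂ] Matrix (Fin n) (Fin n) ℂ}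
    {Ψ : Matrix (Fin n) (Fin n) ℂ →ₗ[ℂ] Matrix (Fin m) (Fin m) ℂ}
    (hΦ : IsPositiveMap Φ) (hadj : IsHSAdjoint Φ Ψ) : IsPositiveMap Ψ := by
  intro X hX
  rw [← Matrix.conjTranspose_conjTranspose (Ψ X)]
  refine Matrix.PosSemidef.conjTranspose ?_
  have key : ∀ v : Fin m → ℂ, 0 ≤ star v ⬝ᵥ ((Ψ X)ᴴ *ᵥ v) := by
    intro v
    have h := hadj X (Matrix.vecMulVec v (star v))
    have h2 := trace_mul_nonneg' hX (hΦ _ (Matrix.posSemidef_vecMulVec_self_star v))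
    rw [hX.1, ] at h
    rw [h, Matrix.mul_vecMulVec, Matrix.trace_vecMulVec, dotProduct_comm] at h2
    exact h2
  have herm : (Ψ X)ᴴ = Ψ X := by
    refine Matrix.ext_iff_trace_mul_right.2 fun Z => ?_
    have h := hadj X Z
    have h' := hadj X Zᴴ
    rw [hX.1] at h h'
    rw [← h]
    have h2 := congrArg star h'
    rw [← Matrix.trace_conjTranspose, ← Matrix.trace_conjTranspose, phi_star hΦ,
      Matrix.conjTranspose_mul, Matrix.conjTranspose_mul, Matrix.conjTranspose_conjTranspose,
      Matrix.conjTranspose_conjTranspose, Matrix.conjTranspose_conjTranspose, hX.1,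
      Matrix.trace_mul_comm, Matrix.trace_mul_comm Z] at h2
    exact h2
  exact Matrix.PosSemidef.of_dotProduct_mulVec_nonneg (by rw [herm]; exact herm) key

lemma step1 {m n : ℕ} {Φ : Matrix (Fin m) (Fin m) ℂ →ₗ[ℂ] Matrix (Fin n) (Fin n) ℂ}
    {Ψ : Matrix (Fin n) (Fin n) ℂ →ₗ[ℂ] Matrix (Fin m) (Fin m) ℂ}
    (hΦ : IsSchwarz Φ) (hadj : IsHSAdjoint Φ Ψ) {s : ℝ} (hs : s ∈ Set.Ioo (0:ℝ) 1)
    (U V : Matrix (Fin n) (Fin n) ℂ) (hU : U * Uᴴ = 1) (hV : V * Vᴴ = 1)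
    (x y : Fin n → ℝ) (hx : ∀ i, 0 ≤ x i) (hy : ∀ i, 0 ≤ y i)
    (U' V' : Matrix (Fin m) (Fin m) ℂ) (hU' : U'ᴴ * U' = 1) (hV' : V'ᴴ * V' = 1)
    (hU'' : U' * U'ᴴ = 1) (hV'' : V' * V'ᴴ = 1)
    (x' y' : Fin m → ℝ) (hx' : ∀ i, 0 ≤ x' i) (hy' : ∀ i, 0 ≤ y' i)
    (hX : Ψ (sp U x) = sp U' x') (hY : Ψ (sp V y) = sp V' y')
    (K : Matrix (Fin m) (Fin m) ℂ) :
    ((Φ K)ᴴ * sp U (fun i => x i ^ s) * Φ K * sp V (fun i => y i ^ (1 - s))).trace.re ≤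
      (Kᴴ * sp U' (fun i => x' i ^ s) * K * sp V' (fun i => y' i ^ (1 - s))).trace.re := by
  rw [trace_sp, trace_sp]
  let L : (Fin m × Fin m → ℂ) → Matrix (Fin m) (Fin m) ℂ :=
    fun a => U' * Matrix.of (fun i j => a (i, j)) * V'ᴴ
  have hL : ∀ a p, (U'ᴴ * L a * V') p.1 p.2 = a p := by
    intro a p
    have : U'ᴴ * L a * V' = Matrix.of (fun i j => a (i, j)) := by
      calc U'ᴴ * L a * V' = (U'ᴴ * U') * Matrix.of (fun i j => a (i, j)) * (V'ᴴ * V') := by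
            simp only [L, Matrix.mul_assoc]
        _ = _ := by rw [hU', hV']; simp
    rw [this]; rfl
  have hLadd : ∀ a b, L (a + b) = L a + L b := by
    intro a b
    simp only [L]
    rw [← add_mul, ← mul_add]; rfl
  have hLK : L (fun p => (U'ᴴ * K * V') p.1 p.2) = K := by
    calc _ = U' * (U'ᴴ * K * V') * V'ᴴ := rfl
      _ = (U' * U'ᴴ) * K * (V' * V'ᴴ) := by simp only [Matrix.mul_assoc]
      _ = K := by rw [hU'', hV'']; simp
  have := aux_interp (I := Fin n × Fin n) (J := Fin m × Fin m) hs (fun p => x p.1) (fun p => y p.2)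
    (fun p => hx _) (fun p => hy _) (fun p => x' p.1) (fun p => y' p.2)
    (fun p => hx' _) (fun p => hy' _)
    (fun p a => Complex.normSq ((Uᴴ * Φ (L a) * V) p.1 p.2))
    ?_ ?_ ?_ (fun p => (U'ᴴ * K * V') p.1 p.2)
  · rw [hLK] at this
    exact this
  · intro p α β hα hβ a b
    rw [hLadd, map_add, mul_add, add_mul]
    exact normSq_par α β hα hβ _ _
  · intro a
    have e1 := trace_sp U V (Φ (L a)) x (fun _ => 1)
    have e2 := trace_sp U' V' (L a) x' (fun _ => 1)
    simp only [mul_one, hL] at e1 e2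
    rw [← e1, ← e2, sp_one _ hV, sp_one _ hV'', mul_one, mul_one, ← hX]
    have h := trace_mul_nonneg' (sp_posSemidef U x hx) (hΦ (L a)ᴴ)
    have h3 := hadj (sp U x) (L a * (L a)ᴴ)
    rw [sp_isHermitian, hX, sp_isHermitian, ← hX] at h3
    rw [phi_star (phi_pos hΦ), Matrix.conjTranspose_conjTranspose,
      Matrix.conjTranspose_conjTranspose, mul_sub, Matrix.trace_sub, h3] at h
    have h4 := (Complex.nonneg_iff.1 h).1
    rw [Complex.sub_re, sub_nonneg] at h4
    rw [Matrix.mul_assoc, Matrix.trace_mul_comm, Matrix.mul_assoc (L a)ᴴ,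
      Matrix.trace_mul_comm (L a)ᴴ]
    simpa only [Matrix.mul_assoc] using h4
  · intro a
    have e1 := trace_sp U V (Φ (L a)) (fun _ => 1) y
    have e2 := trace_sp U' V' (L a) (fun _ => 1) y'
    simp only [one_mul, hL] at e1 e2
    rw [← e1, ← e2, sp_one _ hU, sp_one _ hU'', mul_one, mul_one, ← hY]
    have h := trace_mul_nonneg' (sp_posSemidef V y hy) (hΦ (L a))
    have h3 := hadj (sp V y) ((L a)ᴴ * (L a))
    rw [sp_isHermitian, hY, sp_isHermitian, ← hY] at h3
    rw [mul_sub, Matrix.trace_sub, h3] at h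
    have h4 := (Complex.nonneg_iff.1 h).1
    rw [Complex.sub_re, sub_nonneg] at h4
    rw [Matrix.trace_mul_comm, Matrix.trace_mul_comm _ (Ψ _)]
    exact h4

lemma jensen {m n : ℕ} {Ψ : Matrix (Fin n) (Fin n) ℂ →ₗ[ℂ] Matrix (Fin m) (Fin m) ℂ}
    (hΨ : IsPositiveMap Ψ) {c : ℝ} (hc : 0 ≤ c) (h1 : Ψ 1 = (c : ℂ) • 1)
    {r : ℝ} (hr : r ∈ Set.Ioo (0:ℝ) 1)
    (U : Matrix (Fin n) (Fin n) ℂ) (hU : U * Uᴴ = 1)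
    (x : Fin n → ℝ) (hx : ∀ i, 0 ≤ x i)
    (V : Matrix (Fin m) (Fin m) ℂ) (hV : Vᴴ * V = 1) (hV' : V * Vᴴ = 1)
    (z : Fin m → ℝ) (hz : ∀ i, 0 ≤ z i)
    (hX : Ψ (sp U x) = sp V z) :
    (sp V (fun i => z i ^ r * c ^ (1 - r)) - Ψ (sp U (fun i => x i ^ r))).PosSemidef := by
  have hP : ∀ i, (Ψ (sp U (Pi.single i 1))).PosSemidef := fun i =>
    hΨ _ (sp_posSemidef _ _ fun j => by rw [Pi.single_apply]; split_ifs <;> norm_num)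
  have hsum : ∀ (w : Fin n → ℝ) (v : Fin m → ℂ), (star v ⬝ᵥ (Ψ (sp U w) *ᵥ v)).re =
      ∑ i, w i * (star v ⬝ᵥ (Ψ (sp U (Pi.single i 1)) *ᵥ v)).re := by
    intro w v
    rw [sp_eq_sum U w, map_sum, Matrix.sum_mulVec, dotProduct_sum, Complex.re_sum]
    refine Finset.sum_congr rfl fun i _ => ?_
    rw [map_smul, Matrix.smul_mulVec, dotProduct_smul, smul_eq_mul, Complex.re_ofReal_mul]
  refine psd_of_re ((sp_isHermitian _ _).sub
    (hΨ _ (sp_posSemidef _ _ fun i => Real.rpow_nonneg (hx i) _)).1) fun v => ?_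
  rw [Matrix.sub_mulVec, dotProduct_sub, Complex.sub_re, sub_nonneg, quad_sp, hsum]
  have hVV : ∀ w, Vᴴ *ᵥ (V *ᵥ w) = w := fun w => by rw [Matrix.mulVec_mulVec, hV, Matrix.one_mulVec]
  have hVV' : V *ᵥ (Vᴴ *ᵥ v) = v := by rw [Matrix.mulVec_mulVec, hV', Matrix.one_mulVec]
  have := aux_interp hr x (fun _ => 1) hx (fun _ => zero_le_one) z (fun _ => c) hz (fun _ => hc)
    (fun i w => (star (V *ᵥ w) ⬝ᵥ (Ψ (sp U (Pi.single i 1)) *ᵥ (V *ᵥ w))).re) ?_ ?_ ?_ (Vᴴ *ᵥ v)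
  · simpa only [hVV', Real.one_rpow, mul_one] using this
  · intro i α β hα hβ a b
    simp only [Matrix.mulVec_add V]
    exact quad_par (hP i) α β hα hβ _ _
  · intro a
    rw [← hsum, hX, quad_sp, hVV]
  · intro a
    rw [← hsum, sp_one _ hU, h1]
    have := quad_sp V (fun _ => c * 1) (V *ᵥ a)
    rw [sp_smul, sp_one _ hV', hVV] at this
    rw [this]; simp

lemma sp_mono {m : ℕ} {p : ℝ} (hp : p ∈ Set.Ioo (0:ℝ) 1)
    (U V : Matrix (Fin m) (Fin m) ℂ) (hU : U * Uᴴ = 1)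
    (hV : Vᴴ * V = 1) (hV' : V * Vᴴ = 1)
    (x z : Fin m → ℝ) (hx : ∀ i, 0 ≤ x i) (hz : ∀ i, 0 ≤ z i)
    (h : (sp V z - sp U x).PosSemidef) :
    (sp V (fun i => z i ^ p) - sp U (fun i => x i ^ p)).PosSemidef := by
  have := jensen (Ψ := LinearMap.id) (fun X hX => hX) (c := 1) zero_le_one (by simp) hp U hU x hx
  refine psd_of_re ((sp_isHermitian _ _).sub (sp_isHermitian _ _)) fun v => ?_
  rw [Matrix.sub_mulVec, dotProduct_sub, Complex.sub_re, sub_nonneg, quad_sp, quad_sp]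
  have hVV : ∀ w, Vᴴ *ᵥ (V *ᵥ w) = w := fun w => by rw [Matrix.mulVec_mulVec, hV, Matrix.one_mulVec]
  have hVV' : V *ᵥ (Vᴴ *ᵥ v) = v := by rw [Matrix.mulVec_mulVec, hV', Matrix.one_mulVec]
  have := aux_interp hp x (fun _ => 1) hx (fun _ => zero_le_one) z (fun _ => 1) hz
    (fun _ => zero_le_one)
    (fun i w => Complex.normSq ((Uᴴ *ᵥ (V *ᵥ w)) i)) ?_ ?_ ?_ (Vᴴ *ᵥ v)
  · simpa only [hVV', Real.one_rpow, mul_one] using this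
  · intro i α β hα hβ a b
    simp only [Matrix.mulVec_add, Pi.add_apply]
    exact normSq_par α β hα hβ _ _
  · intro a
    have h2 := (Complex.nonneg_iff.1 (h.dotProduct_mulVec_nonneg (V *ᵥ a))).1
    rw [Matrix.sub_mulVec, dotProduct_sub, Complex.sub_re, sub_nonneg, quad_sp, quad_sp, hVV] at h2
    exact h2
  · intro a
    rw [← quad_sp, sp_one _ hU, ← sp_one V hV', quad_sp, hVV]

lemma trace_mono {m : ℕ} {A A' B B' : Matrix (Fin m) (Fin m) ℂ} (hA : (A' - A).PosSemidef)
    (hB : (B' - B).PosSemidef) (hA' : A'.PosSemidef) (hB0 : B.PosSemidef)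
    (K : Matrix (Fin m) (Fin m) ℂ) :
    (Kᴴ * A * K * B).trace.re ≤ (Kᴴ * A' * K * B').trace.re := by
  have h1 := (Complex.nonneg_iff.1 (trace_mul_nonneg' (hA.conjTranspose_mul_mul_same K) hB0)).1
  have h2 := (Complex.nonneg_iff.1 (trace_mul_nonneg' (hA'.conjTranspose_mul_mul_same K) hB)).1
  simp only [mul_sub, sub_mul, Matrix.trace_sub, Complex.sub_re] at h1 h2
  linarith

theorem stmt10 {m n : ℕ} (hm : 0 < m) (s t : ℝ) (hs : 0 < s) (ht : 0 < t) (hst : s + t ≤ 1)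
    (Φ : Matrix (Fin m) (Fin m) ℂ →ₗ[ℂ] Matrix (Fin n) (Fin n) ℂ)
    (Ψ : Matrix (Fin n) (Fin n) ℂ →ₗ[ℂ] Matrix (Fin m) (Fin m) ℂ)
    (hΦ : IsSchwarz Φ) (hadj : IsHSAdjoint Φ Ψ)
    (hsemi : Ψ 1 = (((n : ℝ) / m : ℝ) : ℂ) • 1)
    (X Y : Matrix (Fin n) (Fin n) ℂ) (hX : X.PosSemidef) (hY : Y.PosSemidef)
    (K : Matrix (Fin m) (Fin m) ℂ) :
    ((Φ K)ᴴ * mpow X s * Φ K * mpow Y t).trace.re ≤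
      ((n : ℝ) / m) ^ (1 - (s + t)) *
        (Kᴴ * mpow (Ψ X) s * K * mpow (Ψ Y) t).trace.re := by
  have hΨ := psi_pos (phi_pos hΦ) hadj
  have hX' := hΨ X hX
  have hY' := hΨ Y hY
  set c : ℝ := (n : ℝ) / m with hcdef
  have hc : 0 ≤ c := by positivity
  have eX := eq_sp hX.1
  have eY := eq_sp hY.1
  have eX' := eq_sp hX'.1
  have eY' := eq_sp hY'.1
  rw [mpow_eq_sp hX.1, mpow_eq_sp hY.1, mpow_eq_sp hX'.1, mpow_eq_sp hY'.1]
  rcases hst.eq_or_lt with h1 | h1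
  · obtain rfl : t = 1 - s := by linarith
    have := step1 hΦ hadj (s := s) ⟨hs, by linarith⟩ _ _ (eu_right hX.1) (eu_right hY.1)
      _ _ hX.eigenvalues_nonneg hY.eigenvalues_nonneg _ _ (eu_left hX'.1) (eu_left hY'.1)
      (eu_right hX'.1) (eu_right hY'.1) _ _ hX'.eigenvalues_nonneg hY'.eigenvalues_nonneg
      (by rw [← eX, ← eX']) (by rw [← eY, ← eY']) K
    simpa using this
  set r := s + t with hr
  have hr0 : 0 < r := by positivity
  have hrI : r ∈ Set.Ioo (0:ℝ) 1 := ⟨hr0, h1⟩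
  have hsr : s / r ∈ Set.Ioo (0:ℝ) 1 := ⟨by positivity, by rw [div_lt_one hr0]; linarith⟩
  have htr : t / r ∈ Set.Ioo (0:ℝ) 1 := ⟨by positivity, by rw [div_lt_one hr0]; linarith⟩
  have hts : 1 - s / r = t / r := by field_simp; linarith
  -- the key operator inequality
  have key : ∀ (Z : Matrix (Fin n) (Fin n) ℂ) (hZ : Z.PosSemidef) (hZ' : (Ψ Z).PosSemidef)
      (hW : (Ψ (sp hZ.1.eigenvectorUnitary (fun i => hZ.1.eigenvalues i ^ r))).PosSemidef)
      (u : ℝ), u / r ∈ Set.Ioo (0:ℝ) 1 →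
      (((c ^ ((1 - r) * (u / r)) : ℝ) : ℂ) •
        sp hZ'.1.eigenvectorUnitary (fun i => hZ'.1.eigenvalues i ^ u) -
        sp hW.1.eigenvectorUnitary (fun i => hW.1.eigenvalues i ^ (u / r))).PosSemidef := by
    intro Z hZ hZ' hW u hu
    have j := jensen hΨ hc hsemi hrI _ (eu_right hZ.1) _ hZ.eigenvalues_nonneg _ (eu_left hZ'.1)
      (eu_right hZ'.1) _ hZ'.eigenvalues_nonneg (by rw [← eq_sp, ← eq_sp])
    have eW := eq_sp hW.1
    rw [eW] at j
    have := sp_mono hu _ _ (eu_right hW.1) (eu_left hZ'.1) (eu_right hZ'.1) _ _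
      hW.eigenvalues_nonneg
      (fun i => mul_nonneg (Real.rpow_nonneg (hZ'.eigenvalues_nonneg i) _) (Real.rpow_nonneg hc _)) j
    rw [← sp_smul]
    convert this using 4 with i
    rw [Real.mul_rpow (Real.rpow_nonneg (hZ'.eigenvalues_nonneg i) _) (Real.rpow_nonneg hc _),
      ← Real.rpow_mul (hZ'.eigenvalues_nonneg i), ← Real.rpow_mul hc, mul_comm]
    congr 2
    field_simp
  have hWX := hΨ _ (sp_posSemidef hX.1.eigenvectorUnitary (fun i => hX.1.eigenvalues i ^ r)
    fun i => Real.rpow_nonneg (hX.eigenvalues_nonneg i) _)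
  have hWY := hΨ _ (sp_posSemidef hY.1.eigenvectorUnitary (fun i => hY.1.eigenvalues i ^ r)
    fun i => Real.rpow_nonneg (hY.eigenvalues_nonneg i) _)
  have kX := key X hX hX' hWX s hsr
  have kY := key Y hY hY' hWY t htr
  have st := step1 hΦ hadj hsr _ _ (eu_right hX.1) (eu_right hY.1)
      _ _ (fun i => Real.rpow_nonneg (hX.eigenvalues_nonneg i) r)
      (fun i => Real.rpow_nonneg (hY.eigenvalues_nonneg i) r) _ _ (eu_left hWX.1) (eu_left hWY.1)
      (eu_right hWX.1) (eu_right hWY.1) _ _ hWX.eigenvalues_nonneg hWY.eigenvalues_nonneg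
      (eq_sp hWX.1) (eq_sp hWY.1) K
  have pw : ∀ (a : ℝ) (u : ℝ), 0 ≤ a → (a ^ r) ^ (u / r) = a ^ u := by
    intro a u ha
    rw [← Real.rpow_mul ha]
    congr 1
    field_simp
  simp only [hts, pw _ _ (hX.eigenvalues_nonneg _), pw _ _ (hY.eigenvalues_nonneg _)] at st
  refine st.trans ((trace_mono kX kY ?_ ?_ K).trans (le_of_eq ?_))
  · rw [← sp_smul]
    exact sp_posSemidef _ _ fun i => mul_nonneg (Real.rpow_nonneg hc _)
      (Real.rpow_nonneg (hX'.eigenvalues_nonneg i) _)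
  · exact sp_posSemidef _ _ fun i => Real.rpow_nonneg (hWY.eigenvalues_nonneg i) _
  · simp only [Matrix.mul_smul, Matrix.smul_mul, Matrix.trace_smul, smul_eq_mul,
      Complex.re_ofReal_mul]
    rw [← mul_assoc, ← Real.rpow_add_of_nonneg hc]
    · congr 2
      rw [← hts]; ring
    · exact mul_nonneg (by linarith) htr.1.le
    · exact mul_nonneg (by linarith) hsr.1.le
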